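/- Let n ∈ ℕ, let F : ℝⁿ → ℝ be any function, and let x^{lb,1}, x^{ub,1}, x^{lb,2}, x^{ub,2}, α¹, α² : Fin n → ℝ satisfy, for all i: x^{lb,1}_i ≤ x^{lb,2}_i ≤ x^{ub,2}_i ≤ x^{ub,1}_i (so the rectangle X² = [x^{lb,2}, x^{ub,2}] is contained in X¹ = [x^{lb,1}, x^{ub,1}]) and 0 ≤ α²_i ≤ α¹_i. Define F̆^{(l)}(x) := F(x) + Σ_i α^{(l)}_i (x^{lb,l}_i − x_i)(x^{ub,l}_i − x_i) for l ∈ {1,2}. Then for every x ∈ X², F̆^{(1)}(x) ≤ F̆^{(2)}(x) ≤ F(x). -/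

import Mathlib

section OneDimensional

variable {R : Type*} [Ring R] [PartialOrder R] [IsOrderedRing R] {l u x : R}

theorem sub_mul_sub_nonpos_of_mem_Icc (hx : x ∈ Set.Icc l u) : (l - x) * (u - x) ≤ 0 :=
  mul_nonpos_of_nonpos_of_nonneg (sub_nonpos.2 hx.1) (sub_nonneg.2 hx.2)

theorem sub_mul_sub_le_sub_mul_sub {l₁ l₂ u₁ u₂ : R} (hl : l₁ ≤ l₂) (hu : u₂ ≤ u₁)
    (hlx : l₂ ≤ x) (hxu : x ≤ u₁) : (l₁ - x) * (u₁ - x) ≤ (l₂ - x) * (u₂ - x) :=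
  calc
    (l₁ - x) * (u₁ - x) ≤ (l₂ - x) * (u₁ - x) :=
      mul_le_mul_of_nonneg_right (sub_le_sub_right hl x) (sub_nonneg.2 hxu)
    _ ≤ (l₂ - x) * (u₂ - x) :=
      mul_le_mul_of_nonpos_left (sub_le_sub_right hu x) (sub_nonpos.2 hlx)

end OneDimensional

section AlphaBB

variable {ι R : Type*} [Fintype ι] [Ring R]

/-- The αBB underestimator of `F` on the box `Set.Icc l u`: `F` plus a separable quadratic that
vanishes at the vertices of the box, with one coefficient `α i` per coordinate. The formula is not
restricted to the box, and neither `0 ≤ α` nor convexity of the result is built in. -/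
def alphaBBUnderestimator (F : (ι → R) → R) (α l u x : ι → R) : R :=
  F x + ∑ i, α i * (l i - x i) * (u i - x i)

variable [PartialOrder R] [IsOrderedRing R] (F : (ι → R) → R)

theorem alphaBBUnderestimator_le {α l u x : ι → R} (hα : 0 ≤ α) (hx : x ∈ Set.Icc l u) :
    alphaBBUnderestimator F α l u x ≤ F x := by
  refine add_le_of_nonpos_right (Finset.sum_nonpos fun i _ => ?_)
  rw [mul_assoc]
  exact mul_nonpos_of_nonneg_of_nonpos (hα i) (sub_mul_sub_nonpos_of_mem_Icc ⟨hx.1 i, hx.2 i⟩)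

theorem alphaBBUnderestimator_anti_coeff {α₁ α₂ l u x : ι → R} (hα : α₂ ≤ α₁)
    (hx : x ∈ Set.Icc l u) :
    alphaBBUnderestimator F α₁ l u x ≤ alphaBBUnderestimator F α₂ l u x := by
  refine add_le_add_right (Finset.sum_le_sum fun i _ => ?_) (F x)
  rw [mul_assoc, mul_assoc]
  exact mul_le_mul_of_nonpos_right (hα i) (sub_mul_sub_nonpos_of_mem_Icc ⟨hx.1 i, hx.2 i⟩)

theorem alphaBBUnderestimator_anti_box {α l₁ l₂ u₁ u₂ x : ι → R} (hα : 0 ≤ α)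
    (hl : l₁ ≤ l₂) (hu : u₂ ≤ u₁) (hx : x ∈ Set.Icc l₂ u₂) :
    alphaBBUnderestimator F α l₁ u₁ x ≤ alphaBBUnderestimator F α l₂ u₂ x := by
  refine add_le_add_right (Finset.sum_le_sum fun i _ => ?_) (F x)
  rw [mul_assoc, mul_assoc]
  exact mul_le_mul_of_nonneg_left
    (sub_mul_sub_le_sub_mul_sub (hl i) (hu i) (hx.1 i) ((hx.2 i).trans (hu i))) (hα i)

theorem alphaBB_tighter_underestimator_general {α₁ α₂ l₁ l₂ u₁ u₂ x : ι → R}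
    (hl : l₁ ≤ l₂) (hu : u₂ ≤ u₁) (hα₂ : 0 ≤ α₂) (hα : α₂ ≤ α₁) (hx : x ∈ Set.Icc l₂ u₂) :
    alphaBBUnderestimator F α₁ l₁ u₁ x ≤ alphaBBUnderestimator F α₂ l₂ u₂ x ∧
      alphaBBUnderestimator F α₂ l₂ u₂ x ≤ F x := by
  refine ⟨?_, alphaBBUnderestimator_le F hα₂ hx⟩
  calc
    alphaBBUnderestimator F α₁ l₁ u₁ x ≤ alphaBBUnderestimator F α₁ l₂ u₂ x :=
      alphaBBUnderestimator_anti_box F (hα₂.trans hα) hl hu hx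
    _ ≤ alphaBBUnderestimator F α₂ l₂ u₂ x := alphaBBUnderestimator_anti_coeff F hα hx

end AlphaBB

/-- Proposition 4 (Tighter Convex Underestimators): on a nested subrectangle
`X² ⊆ X¹` with smaller coefficients `α²ᵢ ≤ α¹ᵢ`, the underestimator on `X²` is
tighter: `F̆⁽¹⁾(x) ≤ F̆⁽²⁾(x) ≤ F(x)` for all `x ∈ X²`. -/
theorem alphaBB_tighter_underestimator
    (n : ℕ) (F : (Fin n → ℝ) → ℝ)
    (xlb1 xub1 xlb2 xub2 α1 α2 : Fin n → ℝ)
    (hnest : ∀ i, xlb1 i ≤ xlb2 i ∧ xlb2 i ≤ xub2 i ∧ xub2 i ≤ xub1 i)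
    (hα : ∀ i, 0 ≤ α2 i ∧ α2 i ≤ α1 i)
    (x : Fin n → ℝ)
    (hx : ∀ i, xlb2 i ≤ x i ∧ x i ≤ xub2 i) :
    F x + ∑ i, α1 i * (xlb1 i - x i) * (xub1 i - x i) ≤
      F x + ∑ i, α2 i * (xlb2 i - x i) * (xub2 i - x i) ∧
    F x + ∑ i, α2 i * (xlb2 i - x i) * (xub2 i - x i) ≤ F x :=
  alphaBB_tighter_underestimator_general F (fun i => (hnest i).1) (fun i => (hnest i).2.2)
    (fun i => (hα i).1) (fun i => (hα i).2) ⟨fun i => (hx i).1, fun i => (hx i).2⟩
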